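/- arXiv:0706.2354 — 4 statements merged into one kernel-verified Lean document; each statement's English description precedes it below -/
import Mathlib

section
/- Let $Q \subset \mathbb{R}^d$ be an integral polytope (the convex hull of finitely many points of $\mathbb{Z}^d$), and let $M \in \mathbb{R}$ be such that $Q \subseteq \{x \in \mathbb{R}^d : |x_i| \le M \text{ for } i = 1, \dots, d\}$. Let $x^* \in Q$ and $\delta > 0$. Then for every integer $k \ge \frac{2}{\delta} d M$, there exists a point $x \in Q \cap \frac{1}{k}\mathbb{Z}^d$ with $\|x - x^*\|_\infty \le \delta$. -/
/-!
By Carathéodory, `x` is a convex combination `∑ w j • z j` of at most `dim + 1` affinely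
independent lattice points. Round all weights but that of one vertex `z j₀` down to multiples of
`1 / k`, and let `j₀` absorb the error. The new weights still form a convex combination, with
value `y`, and `k • y` is a natural combination of lattice points. As the weight changes add up to
zero, the displacement `y - x` is a combination of the at most `dim` differences `z j - z j₀`,
with coefficients at most `1 / k` in absolute value.
-/

open Finset Module

section Rounding

variable {ι : Type*} [Fintype ι]

lemma exists_nat_sum_eq_abs_sub_mul_le_one {w : ι → ℝ} (hw : w ∈ stdSimplex ℝ ι) (k : ℕ) (j₀ : ι) :
    ∃ m : ι → ℕ, ∑ j, m j = k ∧ ∀ j ≠ j₀, |m j - k * w j| ≤ 1 := by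
  classical
  have floor_le (j : ι) : (⌊k * w j⌋₊ : ℝ) ≤ k * w j :=
    Nat.floor_le (mul_nonneg k.cast_nonneg (hw.1 j))
  have sum_floor_le : ∑ j ∈ univ.erase j₀, ⌊k * w j⌋₊ ≤ k := by
    suffices (∑ j ∈ univ.erase j₀, (⌊k * w j⌋₊ : ℝ)) ≤ k by exact_mod_cast this
    calc ∑ j ∈ univ.erase j₀, (⌊k * w j⌋₊ : ℝ)
        ≤ ∑ j, (⌊k * w j⌋₊ : ℝ) :=
          sum_le_sum_of_subset_of_nonneg (erase_subset _ _) fun _ _ _ => Nat.cast_nonneg _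
      _ ≤ ∑ j, k * w j := sum_le_sum fun j _ => floor_le j
      _ = k := by rw [← mul_sum, hw.2, mul_one]
  refine ⟨Function.update (fun j => ⌊k * w j⌋₊) j₀ (k - ∑ j ∈ univ.erase j₀, ⌊k * w j⌋₊), ?_,
    fun j hj => ?_⟩
  · rw [sum_update_of_mem (mem_univ j₀), sdiff_singleton_eq_erase, Nat.sub_add_cancel sum_floor_le]
  · rw [Function.update_of_ne hj, abs_le]
    constructor <;> linarith [floor_le j, Nat.lt_floor_add_one (k * w j)]

variable {E : Type*} [SeminormedAddCommGroup E] [NormedSpace ℝ E]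

lemma norm_sum_smul_le_of_sum_eq_zero {c : ι → ℝ} (hc : ∑ j, c j = 0) {z : ι → E} {j₀ : ι}
    {ε D : ℝ} (hcε : ∀ j ≠ j₀, |c j| ≤ ε) (hzD : ∀ j ≠ j₀, ‖z j - z j₀‖ ≤ D) :
    ‖∑ j, c j • z j‖ ≤ (Fintype.card ι - 1) * (ε * D) := by
  classical
  have sum_eq : ∑ j, c j • z j = ∑ j ∈ univ.erase j₀, c j • (z j - z j₀) := by
    rw [sum_erase _ (by rw [sub_self, smul_zero])]
    simp only [smul_sub, sum_sub_distrib, ← sum_smul, hc, zero_smul, sub_zero]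
  have term_le (j : ι) (hj : j ∈ univ.erase j₀) : ‖c j • (z j - z j₀)‖ ≤ ε * D := by
    have hj₀ := ne_of_mem_erase hj
    rw [norm_smul, Real.norm_eq_abs]
    exact mul_le_mul (hcε j hj₀) (hzD j hj₀) (norm_nonneg _) ((abs_nonneg _).trans (hcε j hj₀))
  calc ‖∑ j, c j • z j‖
      ≤ #(univ.erase j₀) * (ε * D) := by
        rw [sum_eq, ← nsmul_eq_mul]
        exact (norm_sum_le _ _).trans (sum_le_card_nsmul _ _ _ term_le)
    _ = (Fintype.card ι - 1) * (ε * D) := by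
        rw [cast_card_erase_of_mem (mem_univ j₀), card_univ]

lemma exists_mem_convexHull_range_nsmul_mem {L : AddSubmonoid E} {z : ι → E} (hzL : ∀ j, z j ∈ L)
    {D : ℝ} (hzD : ∀ i j, ‖z i - z j‖ ≤ D) {w : ι → ℝ} (hw : w ∈ stdSimplex ℝ ι)
    {k : ℕ} (hk : k ≠ 0) :
    ∃ y ∈ convexHull ℝ (Set.range z),
      k • y ∈ L ∧ k * ‖y - ∑ j, w j • z j‖ ≤ (Fintype.card ι - 1) * D := by
  have hk₀ : (k : ℝ) ≠ 0 := Nat.cast_ne_zero.2 hk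
  obtain ⟨j₀⟩ : Nonempty ι := by
    by_contra! hι
    simpa using hw.2
  obtain ⟨m, sum_m, hm⟩ := exists_nat_sum_eq_abs_sub_mul_le_one hw k j₀
  have sum_m_real : ∑ j, (m j : ℝ) = k := by exact_mod_cast sum_m
  set y := ∑ j, (m j / k : ℝ) • z j with hy
  have smul_y : (k : ℝ) • y = ∑ j, (m j : ℝ) • z j := by
    simp only [hy, smul_sum, smul_smul, mul_div_cancel₀ _ hk₀]
  refine ⟨y, ?_, ?_, ?_⟩
  · refine (convex_convexHull ℝ _).sum_mem (fun j _ => by positivity) ?_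
      fun j _ => subset_convexHull ℝ _ ⟨j, rfl⟩
    rw [← sum_div, sum_m_real, div_self hk₀]
  · rw [← Nat.cast_smul_eq_nsmul ℝ, smul_y]
    simp only [Nat.cast_smul_eq_nsmul]
    exact sum_mem fun j _ => nsmul_mem (hzL j) (m j)
  · have scaled_error : (k : ℝ) • (y - ∑ j, w j • z j) = ∑ j, (m j - k * w j) • z j := by
      simp only [smul_sub, smul_y, smul_sum, smul_smul, sub_smul, sum_sub_distrib]
    have sum_error : ∑ j, (m j - k * w j) = 0 := by
      rw [sum_sub_distrib, ← mul_sum, hw.2, sum_m_real, mul_one, sub_self]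
    calc k * ‖y - ∑ j, w j • z j‖
        = ‖∑ j, (m j - k * w j) • z j‖ := by rw [← scaled_error, norm_smul, Real.norm_natCast]
      _ ≤ (Fintype.card ι - 1) * (1 * D) :=
        norm_sum_smul_le_of_sum_eq_zero sum_error hm fun j _ => hzD j j₀
      _ = (Fintype.card ι - 1) * D := by rw [one_mul]

end Rounding

theorem stmt_1_general {E : Type*} [SeminormedAddCommGroup E] [NormedSpace ℝ E]
    {L : AddSubmonoid E} {S : Set E} [FiniteDimensional ℝ (vectorSpan ℝ S)] (hSL : S ⊆ L)
    {D : ℝ} (hSD : ∀ s ∈ S, ∀ t ∈ S, ‖s - t‖ ≤ D) {x : E} (hx : x ∈ convexHull ℝ S)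
    {δ : ℝ} (hδ : 0 ≤ δ) {k : ℕ} (hk : finrank ℝ (vectorSpan ℝ S) * D ≤ k * δ) :
    ∃ y ∈ convexHull ℝ S, k • y ∈ L ∧ ‖y - x‖ ≤ δ := by
  rcases eq_or_ne k 0 with rfl | hk₀
  · exact ⟨x, hx, by simp only [zero_smul, zero_mem], by rwa [sub_self, norm_zero]⟩
  have hD : 0 ≤ D := by
    obtain ⟨s, hs⟩ := convexHull_nonempty_iff.1 ⟨x, hx⟩
    exact (norm_nonneg _).trans (hSD s hs s hs)
  obtain ⟨ι, _, z, w, hzS, z_indep, w_pos, sum_w, rfl⟩ := eq_pos_convex_span_of_mem_convexHull hx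
  have hz (j : ι) : z j ∈ S := hzS ⟨j, rfl⟩
  have card_le : (Fintype.card ι : ℝ) - 1 ≤ finrank ℝ (vectorSpan ℝ S) := by
    rw [sub_le_iff_le_add]
    exact_mod_cast z_indep.card_le_finrank_succ.trans
      (Nat.succ_le_succ (Submodule.finrank_mono (vectorSpan_mono ℝ hzS)))
  obtain ⟨y, hy, hyL, error_le⟩ := exists_mem_convexHull_range_nsmul_mem (fun j => hSL (hz j))
    (fun i j => hSD _ (hz i) _ (hz j)) ⟨fun j => (w_pos j).le, sum_w⟩ hk₀
  refine ⟨y, convexHull_mono hzS hy, hyL, le_of_mul_le_mul_left ?_ (Nat.cast_pos.2 hk₀.bot_lt)⟩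
  calc k * ‖y - ∑ j, w j • z j‖ ≤ (Fintype.card ι - 1) * D := error_le
    _ ≤ finrank ℝ (vectorSpan ℝ S) * D := by gcongr
    _ ≤ k * δ := hk

lemma exists_mem_convexHull_nsmul_mem_of_norm_le {E : Type*} [SeminormedAddCommGroup E]
    [NormedSpace ℝ E] [FiniteDimensional ℝ E] {L : AddSubmonoid E} {S : Set E} (hSL : S ⊆ L)
    {M : ℝ} (hSM : ∀ s ∈ S, ‖s‖ ≤ M) {x : E} (hx : x ∈ convexHull ℝ S) {δ : ℝ} (hδ : 0 ≤ δ)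
    {k : ℕ} (hk : finrank ℝ E * (2 * M) ≤ k * δ) :
    ∃ y ∈ convexHull ℝ S, k • y ∈ L ∧ ‖y - x‖ ≤ δ := by
  have hM : 0 ≤ M := by
    obtain ⟨s, hs⟩ := convexHull_nonempty_iff.1 ⟨x, hx⟩
    exact (norm_nonneg s).trans (hSM s hs)
  have hSD (s : E) (hs : s ∈ S) (t : E) (ht : t ∈ S) : ‖s - t‖ ≤ 2 * M := by
    linarith [norm_sub_le s t, hSM s hs, hSM t ht]
  refine stmt_1_general hSL hSD hx hδ (le_trans ?_ hk)
  gcongr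
  exact Submodule.finrank_le _

/-- The lattice `ℤ^ι` in `ℝ^ι`; the grid `(1/k)ℤ^ι` is expressed by `k • y ∈ integerPoints ι`.
Only sums and natural multiples of lattice points occur, so it is bundled as an additive
submonoid. -/
def integerPoints (ι : Type*) : AddSubmonoid (ι → ℝ) :=
  AddMonoidHom.mrange ((Int.castAddHom ℝ).compLeft ι)

lemma exists_eq_intCast_div_of_nsmul_mem_integerPoints {ι : Type*} {k : ℕ} {y : ι → ℝ}
    (hy : k • y ∈ integerPoints ι) {i : ι} (hi : k = 0 → y i = 0) : ∃ n : ℤ, y i = n / k := by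
  obtain ⟨v, hv⟩ := hy
  have hvi : (v i : ℝ) = k * y i := (congrFun hv i).trans (by rw [Pi.smul_apply, nsmul_eq_mul])
  refine ⟨v i, ?_⟩
  rcases eq_or_ne k 0 with rfl | hk
  · rw [hi rfl, Nat.cast_zero, div_zero]
  · rw [hvi, mul_div_cancel_left₀ _ (Nat.cast_ne_zero.2 hk)]

/-- grid approximation in an integral polytope. If `Q` is the convex
hull of finitely many integer points, bounded in sup-norm by `M`, `x* ∈ Q` and
`δ > 0`, then for every integer `k ≥ (2/δ)·d·M` there is a point of
`Q ∩ (1/k)ℤ^d` within sup-norm distance `δ` of `x*`. -/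
theorem stmt_1 (d : ℕ) (V : Finset (Fin d → ℤ)) (Q : Set (Fin d → ℝ))
    (hQ : Q = convexHull ℝ ((fun v : Fin d → ℤ => fun i => (v i : ℝ)) '' (V : Set (Fin d → ℤ))))
    (M : ℝ) (hM : ∀ x ∈ Q, ∀ i, |x i| ≤ M)
    (xstar : Fin d → ℝ) (hx : xstar ∈ Q) (δ : ℝ) (hδ : 0 < δ)
    (k : ℤ) (hk : (2 / δ) * (d : ℝ) * M ≤ (k : ℝ)) :
    ∃ x ∈ Q, (∀ i, ∃ n : ℤ, x i = (n : ℝ) / (k : ℝ)) ∧ ‖x - xstar‖ ≤ δ := by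
  rcases d.eq_zero_or_pos with rfl | hd
  · exact ⟨xstar, hx, fun i => i.elim0, by rw [sub_self, norm_zero]; exact hδ.le⟩
  have hM₀ : 0 ≤ M := (abs_nonneg _).trans (hM xstar hx ⟨0, hd⟩)
  lift k to ℕ using by exact_mod_cast (show 0 ≤ 2 / δ * d * M by positivity).trans hk
  rw [Int.cast_natCast] at hk ⊢
  have hkδ : d * (2 * M) ≤ k * δ := by
    calc d * (2 * M) = 2 / δ * d * M * δ := by field_simp
      _ ≤ k * δ := by gcongr
  subst hQ
  obtain ⟨y, hyQ, hyL, hyx⟩ := exists_mem_convexHull_nsmul_mem_of_norm_le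
    (L := integerPoints (Fin d)) (Set.image_subset_range _ _)
    (fun s hs => (pi_norm_le_iff_of_nonneg hM₀).2 (hM s (subset_convexHull ℝ _ hs)))
    hx hδ.le (by rwa [finrank_fin_fun])
  refine ⟨y, hyQ, fun i => exists_eq_intCast_div_of_nsmul_mem_integerPoints hyL fun hk₀ => ?_, hyx⟩
  -- The junk case `n / 0 = 0`: here `M = 0`, so `Q` is the origin.
  have hM_nonpos : M ≤ 0 := by
    rw [hk₀, Nat.cast_zero, zero_mul] at hkδ
    linarith [nonpos_of_mul_nonpos_right hkδ (Nat.cast_pos.2 hd)]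
  exact abs_nonpos_iff.1 ((hM y hyQ i).trans hM_nonpos)
end

section
/- Let $P = \{(x,z) \in \mathbb{R}^{d_1} \times \mathbb{R}^{d_2} : Ax + Bz \le b\}$ be a polytope with $A \in \mathbb{Z}^{p \times d_1}$, $B \in \mathbb{Z}^{p \times d_2}$, $b \in \mathbb{Z}^p$, and let $M \in \mathbb{R}$ satisfy $P \subseteq \{(x,z) : |x_i| \le M \text{ for } i = 1, \dots, d_1\}$. Then there exists a positive integer $\Delta$ such that for every $(x^*, z^*) \in P \cap (\mathbb{R}^{d_1} \times \mathbb{Z}^{d_2})$ and every $\delta > 0$ the following holds: for every $m = k\Delta$ with $k$ an integer satisfying $k \ge \frac{2}{\delta} d_1 M$, there exists a lattice point $x \in \frac{1}{m}\mathbb{Z}^{d_1}$ such that $(x, z^*) \in P$ and $\|x - x^*\|_\infty \le \delta$. -/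
/-!
For an integral right-hand side `c`, a vertex of `{x | A x ≤ c}` is the only solution of the system
formed by its active rows `A'`, so by Cramer's rule for the normal equations `A'ᵀ A' x = A'ᵀ c'` it
lies in `(1 / det (A'ᵀ A')) ℤⁿ`. A common multiple `Δ` of these finitely many determinants depends
on `A` alone, so it serves at once all fibres `A x ≤ b - B z` with `z` integral.

By Carathéodory, a point of a bounded fibre is a convex combination of at most `n + 1` vertices.
Rounding all weights but one down to multiples of `1 / k`, and letting the last one absorb the
difference, gives a point of the fibre in `(1 / (k Δ)) ℤⁿ`. Each of the at most `n` rounded weights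
moves by at most `1 / k` along a difference of two vertices, which has norm at most `2 M`.
-/

open Matrix Module Set Topology

section Rounding

variable {ι E : Type*} [Fintype ι] [NormedAddCommGroup E] [NormedSpace ℝ E]

lemma exists_int_weights_abs_sub_le_one {w : ι → ℝ} (hw : ∀ i, 0 ≤ w i) (hw_sum : ∑ i, w i = 1)
    (i₀ : ι) {k : ℤ} (hk : 0 ≤ k) :
    ∃ N : ι → ℤ, (∀ i, 0 ≤ N i) ∧ ∑ i, N i = k ∧ ∀ i ≠ i₀, |(N i : ℝ) - k * w i| ≤ 1 := by
  classical
  have hkR : (0 : ℝ) ≤ k := by exact_mod_cast hk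
  have floor_nonneg (i) : 0 ≤ ⌊k * w i⌋ := Int.floor_nonneg.2 (mul_nonneg hkR (hw i))
  have floor_sum_le : ∑ i ∈ Finset.univ.erase i₀, ⌊k * w i⌋ ≤ k := by
    have : ∑ i, (⌊k * w i⌋ : ℝ) ≤ k :=
      calc ∑ i, (⌊k * w i⌋ : ℝ) ≤ ∑ i, k * w i := Finset.sum_le_sum fun i _ => Int.floor_le _
        _ = k := by rw [← Finset.mul_sum, hw_sum, mul_one]
    calc ∑ i ∈ Finset.univ.erase i₀, ⌊k * w i⌋ ≤ ∑ i, ⌊k * w i⌋ :=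
          Finset.sum_le_sum_of_subset_of_nonneg (Finset.erase_subset _ _) fun i _ _ =>
            floor_nonneg i
      _ ≤ k := by exact_mod_cast this
  refine ⟨Function.update (fun i => ⌊k * w i⌋) i₀ (k - ∑ i ∈ Finset.univ.erase i₀, ⌊k * w i⌋),
    fun i => ?_, ?_, fun i hi => ?_⟩
  · obtain rfl | hi := eq_or_ne i i₀
    · simpa using floor_sum_le
    · simpa [hi] using floor_nonneg i
  · rw [Finset.sum_update_of_mem (Finset.mem_univ i₀), ← Finset.erase_eq, sub_add_cancel]
  · rw [Function.update_of_ne hi, abs_sub_comm, abs_le]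
    constructor <;> linarith [Int.floor_le (k * w i), Int.lt_floor_add_one (k * w i)]

lemma norm_sum_smul_le_of_sum_eq_zero_s2 {u : ι → ℝ} {z : ι → E} {i₀ : ι} {ε D : ℝ}
    (hu_sum : ∑ i, u i = 0) (hu : ∀ i ≠ i₀, |u i| ≤ ε) (hz : ∀ i, ‖z i - z i₀‖ ≤ D) :
    ‖∑ i, u i • z i‖ ≤ (Fintype.card ι - 1) * (ε * D) := by
  classical
  have recentre : ∑ i, u i • z i = ∑ i ∈ Finset.univ.erase i₀, u i • (z i - z i₀) :=
    calc ∑ i, u i • z i = ∑ i, u i • (z i - z i₀) := by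
          simp only [smul_sub, Finset.sum_sub_distrib, ← Finset.sum_smul, hu_sum, zero_smul,
            sub_zero]
      _ = _ := (Finset.sum_erase _ (by simp)).symm
  calc ‖∑ i, u i • z i‖ ≤ ∑ _i ∈ Finset.univ.erase i₀, ε * D := by
        rw [recentre]
        refine norm_sum_le_of_le _ fun i hi => ?_
        have hui := hu i (Finset.ne_of_mem_erase hi)
        rw [norm_smul, Real.norm_eq_abs]
        exact mul_le_mul hui (hz i) (norm_nonneg _) ((abs_nonneg _).trans hui)
    _ = (Fintype.card ι - 1) * (ε * D) := by
        rw [Finset.sum_const, nsmul_eq_mul, Finset.cast_card_erase_of_mem (Finset.mem_univ i₀),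
          Finset.card_univ]

lemma exists_mem_convexHull_range_zsmul_mem_closure_norm_sub_le {w : ι → ℝ} (hw : ∀ i, 0 ≤ w i)
    (hw_sum : ∑ i, w i = 1) {z : ι → E} {i₀ : ι} {D : ℝ} (hz : ∀ i, ‖z i - z i₀‖ ≤ D)
    {k : ℤ} (hk : 0 < k) :
    ∃ y ∈ convexHull ℝ (range z), k • y ∈ AddSubgroup.closure (range z) ∧
      ‖y - ∑ i, w i • z i‖ ≤ (Fintype.card ι - 1) * D / k := by
  obtain ⟨N, hN, hN_sum, hNw⟩ := exists_int_weights_abs_sub_le_one hw hw_sum i₀ hk.le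
  have hkR : (0 : ℝ) < k := by exact_mod_cast hk
  have hN_sumR : ∑ i, (N i : ℝ) = k := by exact_mod_cast hN_sum
  set y := Finset.univ.centerMass (fun i => (N i : ℝ)) z
  have smul_y : (k : ℝ) • y = ∑ i, (N i : ℝ) • z i := by
    simp only [y, Finset.centerMass, hN_sumR, smul_inv_smul₀ hkR.ne']
  refine ⟨y, Finset.centerMass_mem_convexHull _ (fun i _ => by exact_mod_cast hN i)
    (hN_sumR ▸ hkR) fun i _ => mem_range_self i, ?_, ?_⟩
  · rw [← Int.cast_smul_eq_zsmul ℝ, smul_y]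
    simp only [Int.cast_smul_eq_zsmul]
    exact sum_mem fun i _ => zsmul_mem (AddSubgroup.subset_closure (mem_range_self i)) _
  · have smul_error : (k : ℝ) • (y - ∑ i, w i • z i) = ∑ i, ((N i : ℝ) - k * w i) • z i := by
      simp only [smul_sub, smul_y, sub_smul, Finset.sum_sub_distrib, Finset.smul_sum, mul_smul]
    have error_sum : ∑ i, ((N i : ℝ) - k * w i) = 0 := by
      rw [Finset.sum_sub_distrib, ← Finset.mul_sum, hN_sumR, hw_sum, mul_one, sub_self]
    rw [le_div_iff₀' hkR, ← abs_of_pos hkR, ← Real.norm_eq_abs, ← norm_smul, smul_error]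
    simpa only [one_mul] using norm_sum_smul_le_of_sum_eq_zero_s2 error_sum hNw hz

lemma exists_mem_convexHull_zsmul_mem_norm_sub_le [FiniteDimensional ℝ E] {L : AddSubgroup E}
    {V : Set E} (hVL : V ⊆ L) {M : ℝ} (hM : ∀ v ∈ V, ‖v‖ ≤ M) {x : E} (hx : x ∈ convexHull ℝ V)
    {k : ℤ} (hk : 0 < k) :
    ∃ y ∈ convexHull ℝ V, k • y ∈ L ∧ ‖y - x‖ ≤ 2 * finrank ℝ E * M / k := by
  obtain ⟨κ, _, z, w, hzV, hz_indep, hw, hw_sum, rfl⟩ := eq_pos_convex_span_of_mem_convexHull hx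
  obtain ⟨i₀⟩ : Nonempty κ := by
    by_contra! h
    simp at hw_sum
  have hzM (i) : ‖z i‖ ≤ M := hM _ (hzV (mem_range_self i))
  obtain ⟨y, hy, hy_closure, hy_dist⟩ :=
    exists_mem_convexHull_range_zsmul_mem_closure_norm_sub_le (fun i => (hw i).le) hw_sum
      (fun i => norm_sub_le_of_le (hzM i) (hzM i₀)) hk
  have hcard : (Fintype.card κ : ℝ) - 1 ≤ finrank ℝ E := by
    rw [sub_le_iff_le_add]
    exact_mod_cast hz_indep.card_le_finrank_succ.trans (Nat.succ_le_succ (Submodule.finrank_le _))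
  have hM_nonneg : 0 ≤ M := (norm_nonneg _).trans (hzM i₀)
  refine ⟨y, convexHull_mono hzV hy, (AddSubgroup.closure_le L).2 (hzV.trans hVL) hy_closure, ?_⟩
  calc ‖y - ∑ i, w i • z i‖ ≤ (Fintype.card κ - 1) * (M + M) / k := hy_dist
    _ ≤ finrank ℝ E * (M + M) / k := by gcongr
    _ = 2 * finrank ℝ E * M / k := by ring

end Rounding

section Polyhedron

variable {ι n : Type*} [Fintype n] {A : Matrix ι n ℝ} {b : ι → ℝ} {x y : n → ℝ}

/-- The solution set of the system of linear inequalities `A x ≤ b`. -/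
def polyhedron (A : Matrix ι n ℝ) (b : ι → ℝ) : Set (n → ℝ) :=
  {x | A *ᵥ x ≤ b}

/-- The rows of the system `A x ≤ b` that hold with equality at `x`; at a vertex of the polyhedron
they determine `x`. -/
def activeRows (A : Matrix ι n ℝ) (b : ι → ℝ) (x : n → ℝ) : Set ι :=
  {i | (A *ᵥ x) i = b i}

lemma isClosed_polyhedron : IsClosed (polyhedron A b) :=
  isClosed_le (by fun_prop) continuous_const

lemma convex_polyhedron : Convex ℝ (polyhedron A b) :=
  (convex_Iic b).linear_preimage A.mulVecLin

variable [Finite ι]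

lemma eventually_add_smul_mem_polyhedron (hx : x ∈ polyhedron A b)
    (hy : ∀ i ∈ activeRows A b x, (A *ᵥ y) i = 0) :
    ∀ᶠ ε in 𝓝 (0 : ℝ), x + ε • y ∈ polyhedron A b := by
  suffices ∀ i, ∀ᶠ ε in 𝓝 (0 : ℝ), (A *ᵥ x) i + ε * (A *ᵥ y) i ≤ b i by
    filter_upwards [Filter.eventually_all.2 this] with ε hε i
    simpa [mulVec_add, mulVec_smul] using hε i
  intro i
  by_cases hi : i ∈ activeRows A b x
  · exact .of_forall fun ε => by simpa only [hy i hi, mul_zero, add_zero] using hx i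
  · have hlt : (A *ᵥ x) i + 0 * (A *ᵥ y) i < b i := by simpa using lt_of_le_of_ne (hx i) hi
    have hcont : ContinuousAt (fun ε : ℝ => (A *ᵥ x) i + ε * (A *ᵥ y) i) 0 := by fun_prop
    exact (hcont.eventually_lt continuousAt_const hlt).mono fun _ => le_of_lt

lemma eq_zero_of_mem_extremePoints_polyhedron (hx : x ∈ (polyhedron A b).extremePoints ℝ)
    (hy : ∀ i ∈ activeRows A b x, (A *ᵥ y) i = 0) : y = 0 := by
  have h_add := eventually_add_smul_mem_polyhedron hx.1 hy
  have h_sub := eventually_add_smul_mem_polyhedron (y := -y) hx.1 fun i hi => by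
    rw [mulVec_neg, Pi.neg_apply, hy i hi, neg_zero]
  obtain ⟨ε, ⟨h_add, h_sub⟩, hε⟩ :=
    (((h_add.and h_sub).filter_mono nhdsWithin_le_nhds).and
      (self_mem_nhdsWithin : Ioi (0 : ℝ) ∈ 𝓝[>] 0)).exists
  have hmid : x ∈ openSegment ℝ (x + ε • y) (x + ε • -y) :=
    ⟨1 / 2, 1 / 2, by norm_num, by norm_num, by norm_num, by module⟩
  have hεy : ε • y = 0 := add_eq_left.1 (hx.2 h_add h_sub hmid)
  exact (smul_eq_zero.1 hεy).resolve_left (ne_of_gt hε)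

lemma injective_mulVec_submatrix_activeRows (hx : x ∈ (polyhedron A b).extremePoints ℝ) :
    Function.Injective (A.submatrix ((↑) : activeRows A b x → ι) id).mulVec := by
  refine (injective_iff_map_eq_zero (mulVecLin _)).2 fun y hy => ?_
  exact eq_zero_of_mem_extremePoints_polyhedron hx fun i hi => congrFun hy ⟨i, hi⟩

lemma finite_extremePoints_polyhedron : ((polyhedron A b).extremePoints ℝ).Finite := by
  refine Set.Finite.of_finite_image (f := activeRows A b) (Set.toFinite _) fun x hx y _ hxy => ?_
  refine sub_eq_zero.1 (eq_zero_of_mem_extremePoints_polyhedron hx fun i hi => ?_)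
  have hxi : (A *ᵥ x) i = b i := hi
  have hyi : i ∈ activeRows A b y := hxy ▸ hi
  rw [mulVec_sub, Pi.sub_apply, hxi, hyi.out, sub_self]

lemma convexHull_extremePoints_polyhedron (hbdd : Bornology.IsBounded (polyhedron A b)) :
    convexHull ℝ ((polyhedron A b).extremePoints ℝ) = polyhedron A b := by
  have hcompact := Metric.isCompact_of_isClosed_isBounded isClosed_polyhedron hbdd
  rw [← (finite_extremePoints_polyhedron.isClosed_convexHull ℝ).closure_eq]
  exact closure_convexHull_extremePoints hcompact convex_polyhedron

end Polyhedron

section Grid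

variable {n : Type*} {a m k : ℤ} {x : n → ℝ}

/-- The lattice `(1 / m) ℤⁿ`, as an additive subgroup of `ℝⁿ`. For `m = 0` the convention `0⁻¹ = 0`
makes it the zero subgroup. -/
noncomputable def grid (n : Type*) (m : ℤ) : AddSubgroup (n → ℝ) :=
  AddSubgroup.pi univ fun _ => AddSubgroup.zmultiples (m : ℝ)⁻¹

lemma mem_grid_iff_exists_eq_div : x ∈ grid n m ↔ ∀ j, ∃ r : ℤ, x j = r / m := by
  simp only [grid, AddSubgroup.mem_pi, mem_univ, forall_const, AddSubgroup.mem_zmultiples_iff,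
    zsmul_eq_mul, div_eq_mul_inv, eq_comm]

lemma mem_grid_of_smul_eq_intCast (hm : m ≠ 0) {r : n → ℤ} (h : (m : ℝ) • x = Int.cast ∘ r) :
    x ∈ grid n m :=
  mem_grid_iff_exists_eq_div.2 fun j =>
    ⟨r j, eq_div_of_mul_eq (Int.cast_ne_zero.2 hm) ((mul_comm _ _).trans (congrFun h j))⟩

lemma mem_grid_mul_of_zsmul_mem (hk : k ≠ 0) (h : k • x ∈ grid n m) : x ∈ grid n (k * m) := by
  refine mem_grid_iff_exists_eq_div.2 fun j => ?_
  obtain ⟨r, hr⟩ := mem_grid_iff_exists_eq_div.1 h j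
  rw [Pi.smul_apply, zsmul_eq_mul] at hr
  refine ⟨r, ?_⟩
  rw [Int.cast_mul, div_mul_eq_div_div_swap, ← hr, mul_div_cancel_left₀ _ (Int.cast_ne_zero.2 hk)]

lemma grid_le_grid_of_dvd (ham : a ∣ m) (hm : m ≠ 0) : grid n a ≤ grid n m := by
  obtain ⟨c, rfl⟩ := ham
  intro x hx
  rw [mul_comm]
  exact mem_grid_mul_of_zsmul_mem (right_ne_zero_of_mul hm) (zsmul_mem hx c)

end Grid

section IntegerSystem

variable {ι κ n : Type*} [Fintype n]

lemma exists_integer_mul_eq_smul_one [DecidableEq n] [Fintype κ] {A : Matrix κ n ℤ}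
    (hA : Function.Injective (A.map (Int.cast : ℤ → ℝ)).mulVec) :
    ∃ m : ℤ, m ≠ 0 ∧ ∃ N : Matrix n κ ℤ, N * A = m • 1 := by
  refine ⟨(Aᵀ * A).det, ?_, adjugate (Aᵀ * A) * Aᵀ, by rw [Matrix.mul_assoc, adjugate_mul]⟩
  set R := A.map (Int.cast : ℤ → ℝ)
  have hgram : (Aᵀ * A).map (Int.cast : ℤ → ℝ) = Rᵀ * R :=
    Matrix.map_mul (f := Int.castRingHom ℝ)
  have hinj : Function.Injective (Rᵀ * R).mulVec := by
    have hker : LinearMap.ker R.mulVecLin = ⊥ := LinearMap.ker_eq_bot.2 hA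
    rw [← ker_mulVecLin_transpose_mul_self] at hker
    exact LinearMap.ker_eq_bot.1 hker
  have hdet := ((isUnit_iff_isUnit_det _).1 (mulVec_injective_iff_isUnit.1 hinj)).ne_zero
  rw [← hgram] at hdet
  exact_mod_cast (Int.cast_det (R := ℝ) (Aᵀ * A)).trans_ne hdet

lemma exists_forall_mem_grid_of_injective_mulVec [Finite κ] {A : Matrix κ n ℤ}
    (hA : Function.Injective (A.map (Int.cast : ℤ → ℝ)).mulVec) :
    ∃ m : ℤ, m ≠ 0 ∧ ∀ (c : κ → ℤ) (x : n → ℝ),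
      A.map (Int.cast : ℤ → ℝ) *ᵥ x = Int.cast ∘ c → x ∈ grid n m := by
  classical
  cases nonempty_fintype κ
  obtain ⟨m, hm, N, hN⟩ := exists_integer_mul_eq_smul_one hA
  refine ⟨m, hm, fun c x hx => mem_grid_of_smul_eq_intCast hm (r := N *ᵥ c) ?_⟩
  have hNR : N.map (Int.cast : ℤ → ℝ) * A.map (Int.cast : ℤ → ℝ) = (m : ℝ) • 1 :=
    calc _ = (N * A).map (Int.cast : ℤ → ℝ) := (Matrix.map_mul (f := Int.castRingHom ℝ)).symm
      _ = (m : ℝ) • 1 := by ext i j; simp [hN, Matrix.intCast_apply, Matrix.one_apply]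
  calc (m : ℝ) • x = N.map (Int.cast : ℤ → ℝ) *ᵥ (A.map (Int.cast : ℤ → ℝ) *ᵥ x) := by
        rw [mulVec_mulVec, hNR, smul_mulVec, one_mulVec]
    _ = Int.cast ∘ (N *ᵥ c) := by
        rw [hx]
        exact funext fun j => ((Int.castRingHom ℝ).map_mulVec N c j).symm

/-- The polyhedron `A x ≤ c` of real solutions of a system with integer data. -/
abbrev integerPolyhedron (A : Matrix ι n ℤ) (c : ι → ℤ) : Set (n → ℝ) :=
  polyhedron (A.map Int.cast) (Int.cast ∘ c)

lemma mem_integerPolyhedron_sub_mulVec {n' : Type*} [Fintype n'] {A : Matrix ι n ℤ}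
    {B : Matrix ι n' ℤ} {b : ι → ℤ} {x : n → ℝ} {z : n' → ℤ} :
    x ∈ integerPolyhedron A (b - B *ᵥ z) ↔
      ∀ i, ∑ j, (A i j : ℝ) * x j + ∑ j, (B i j : ℝ) * z j ≤ b i := by
  simp [polyhedron, Pi.le_def, mulVec, dotProduct, le_sub_iff_add_le]

lemma exists_forall_extremePoints_subset_grid [Finite ι] (A : Matrix ι n ℤ) :
    ∃ Δ : ℕ, 0 < Δ ∧
      ∀ c : ι → ℤ, (integerPolyhedron A c).extremePoints ℝ ⊆ grid n Δ := by
  cases nonempty_fintype (Set ι)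
  let rows (I : Set ι) : Matrix I n ℤ := A.submatrix (↑) id
  have hrows (I : Set ι) : ∃ m : ℤ, m ≠ 0 ∧
      (Function.Injective ((rows I).map (Int.cast : ℤ → ℝ)).mulVec → ∀ (c : I → ℤ) (x : n → ℝ),
        (rows I).map (Int.cast : ℤ → ℝ) *ᵥ x = Int.cast ∘ c → x ∈ grid n m) := by
    by_cases hI : Function.Injective ((rows I).map (Int.cast : ℤ → ℝ)).mulVec
    · obtain ⟨m, hm, hgrid⟩ := exists_forall_mem_grid_of_injective_mulVec hI
      exact ⟨m, hm, fun _ => hgrid⟩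
    · exact ⟨1, one_ne_zero, fun h => absurd h hI⟩
  choose m hm hgrid using hrows
  have hprod : ∏ I, m I ≠ 0 := Finset.prod_ne_zero_iff.2 fun I _ => hm I
  refine ⟨(∏ I, m I).natAbs, Int.natAbs_pos.2 hprod, fun c x hx => ?_⟩
  have hdvd : m (activeRows (A.map Int.cast) (Int.cast ∘ c) x) ∣ ((∏ I, m I).natAbs : ℤ) :=
    Int.dvd_natAbs.2 (Finset.dvd_prod_of_mem m (Finset.mem_univ _))
  refine grid_le_grid_of_dvd hdvd (by exact_mod_cast Int.natAbs_ne_zero.2 hprod) ?_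
  exact hgrid _ (injective_mulVec_submatrix_activeRows hx) (fun i => c i) x
    (funext fun i => i.2)

lemma exists_mem_grid_mem_integerPolyhedron_norm_sub_le [Finite ι] {A : Matrix ι n ℤ} {c : ι → ℤ}
    {m : ℤ} (hgrid : (integerPolyhedron A c).extremePoints ℝ ⊆ grid n m) {M : ℝ}
    (hM : ∀ x ∈ integerPolyhedron A c, ‖x‖ ≤ M) {x : n → ℝ} (hx : x ∈ integerPolyhedron A c)
    {k : ℤ} (hk : 0 < k) :
    ∃ y ∈ grid n (k * m), y ∈ integerPolyhedron A c ∧ ‖y - x‖ ≤ 2 * Fintype.card n * M / k := by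
  have hhull := convexHull_extremePoints_polyhedron (isBounded_iff_forall_norm_le.2 ⟨M, hM⟩)
  obtain ⟨y, hy, hy_grid, hyx⟩ := exists_mem_convexHull_zsmul_mem_norm_sub_le hgrid
    (fun v hv => hM v (extremePoints_subset hv)) (hhull.ge hx) hk
  rw [finrank_fintype_fun_eq_card] at hyx
  exact ⟨y, mem_grid_mul_of_zsmul_mem hk.ne' hy_grid, hhull.le hy, hyx⟩

theorem stmt_2_general [Finite ι] (A : Matrix ι n ℤ) :
    ∃ Δ : ℕ, 0 < Δ ∧ ∀ (c : ι → ℤ) (M : ℝ), (∀ x ∈ integerPolyhedron A c, ∀ j, |x j| ≤ M) →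
      ∀ xstar ∈ integerPolyhedron A c, ∀ δ : ℝ, 0 < δ →
        ∀ k : ℤ, 2 / δ * Fintype.card n * M ≤ k →
          ∃ x ∈ grid n (k * Δ), x ∈ integerPolyhedron A c ∧ ‖x - xstar‖ ≤ δ := by
  obtain ⟨Δ, hΔ, hgrid⟩ := exists_forall_extremePoints_subset_grid A
  refine ⟨Δ, hΔ, fun c M hM xstar hxstar δ hδ k hk => ?_⟩
  have of_xstar_eq_zero (h : xstar = 0) :
      ∃ x ∈ grid n (k * Δ), x ∈ integerPolyhedron A c ∧ ‖x - xstar‖ ≤ δ :=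
    ⟨xstar, h ▸ zero_mem _, hxstar, by simpa using hδ.le⟩
  cases isEmpty_or_nonempty n
  · exact of_xstar_eq_zero (Subsingleton.elim _ _)
  have hM_nonneg : 0 ≤ M := (abs_nonneg _).trans (hM xstar hxstar (Classical.arbitrary n))
  have hM_norm : ∀ x ∈ integerPolyhedron A c, ‖x‖ ≤ M := fun x hx =>
    (pi_norm_le_iff_of_nonneg hM_nonneg).2 (hM x hx)
  obtain hM_zero | hM_pos := hM_nonneg.eq_or_lt
  · exact of_xstar_eq_zero (norm_le_zero_iff.1 (hM_zero ▸ hM_norm xstar hxstar))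
  have hkR : (0 : ℝ) < k := lt_of_lt_of_le (by positivity) hk
  obtain ⟨x, hx_grid, hx, hx_dist⟩ := exists_mem_grid_mem_integerPolyhedron_norm_sub_le (hgrid c)
    hM_norm hxstar (Int.cast_pos.1 hkR)
  refine ⟨x, hx_grid, hx, hx_dist.trans ((div_le_iff₀ hkR).2 ?_)⟩
  calc 2 * Fintype.card n * M = δ * (2 / δ * Fintype.card n * M) := by field_simp
    _ ≤ δ * k := by gcongr

end IntegerSystem

/-- Grid Approximation Theorem. For a polytope
`P = {(x,z) : Ax + Bz ≤ b}` with integer data, bounded with `|xᵢ| ≤ M` on `P`,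
there is a positive integer `Δ` such that for every mixed-integer point
`(x*, z*) ∈ P ∩ (ℝ^{d₁} × ℤ^{d₂})`, every `δ > 0` and every integer
`k ≥ (2/δ)·d₁·M`, the lattice `(1/(kΔ))ℤ^{d₁}` contains a point `x` with
`(x, z*) ∈ P` and `‖x - x*‖_∞ ≤ δ`. -/
theorem stmt_2 (p d1 d2 : ℕ)
    (A : Fin p → Fin d1 → ℤ) (B : Fin p → Fin d2 → ℤ) (b : Fin p → ℤ)
    (P : Set ((Fin d1 → ℝ) × (Fin d2 → ℝ)))
    (hP : P = {xz | ∀ i, (∑ j, (A i j : ℝ) * xz.1 j) + (∑ j, (B i j : ℝ) * xz.2 j) ≤ (b i : ℝ)})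
    (hbdd : Bornology.IsBounded P)
    (M : ℝ) (hM : ∀ xz ∈ P, ∀ i, |xz.1 i| ≤ M) :
    ∃ Δ : ℕ, 0 < Δ ∧
      ∀ (xstar : Fin d1 → ℝ) (zstar : Fin d2 → ℤ),
        (xstar, fun i => (zstar i : ℝ)) ∈ P →
        ∀ δ : ℝ, 0 < δ →
        ∀ k : ℤ, (2 / δ) * (d1 : ℝ) * M ≤ (k : ℝ) →
          ∃ x : Fin d1 → ℝ,
            (∀ i, ∃ n : ℤ, x i = (n : ℝ) / ((k : ℝ) * (Δ : ℝ))) ∧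
            (x, fun i => (zstar i : ℝ)) ∈ P ∧ ‖x - xstar‖ ≤ δ := by
  obtain ⟨Δ, hΔ, happrox⟩ := stmt_2_general (Matrix.of A)
  subst hP
  refine ⟨Δ, hΔ, fun xstar zstar hxstar => ?_⟩
  simpa [mem_integerPolyhedron_sub_mulVec, mem_grid_iff_exists_eq_div] using
    happrox (b - Matrix.of B *ᵥ zstar) M
      (fun x hx => hM (x, _) (mem_integerPolyhedron_sub_mulVec.1 hx))
      xstar (mem_integerPolyhedron_sub_mulVec.2 hxstar)
end

section
/- Let $f \in \mathbb{Q}[x_1, \dots, x_d]$ be a polynomial of total degree at most $D$. Let $Q \subset \mathbb{R}^d$ be an integral polytope whose affine hull has dimension $d' \le d$, and let $k$ be an integer with $k \ge D \, d'$. Then $f$ is constant on $Q$ if and only if $f$ is constant on $Q \cap \frac{1}{k}\mathbb{Z}^d$. -/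
/-!
A polynomial of degree at most `k` in `m` variables that vanishes on the simplicial grid
`{n ∈ ℕᵐ : n₁ + ⋯ + nₘ ≤ k}` is zero: by the combinatorial Nullstellensatz, a top-degree monomial
`X ^ t` forces a nonzero value on the box `∏ᵢ {0, …, tᵢ}`, and that box lies in the grid.

Write a point of the polytope as `v + ∑ wᵢ (zᵢ - v)` with integral `v`, `zᵢ` in the generating set,
and pull `f` back along `t ↦ v + ∑ (tᵢ / k) (zᵢ - v)`. This map sends the simplicial grid into
`Q ∩ (1/k)ℤ^d`, so if `f` is constant there and `deg f ≤ k`, its pullback is constant. For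
`d' ≥ 1` the bound `D * d' ≤ k` gives `deg f ≤ k`; for `d' = 0`, `Q` has at most one point.
-/

open Finset MvPolynomial

section PolynomialIdentity

variable {σ ι R S : Type*}

lemma eq_zero_of_eval_natCast_eq_zero [Fintype ι] [CommRing S] [IsDomain S] [CharZero S]
    {p : MvPolynomial ι S} {k : ℕ} (hp : p.totalDegree ≤ k)
    (hzero : ∀ n : ι → ℕ, ∑ i, n i ≤ k → eval (fun i => (n i : S)) p = 0) : p = 0 := by
  by_contra hne
  obtain ⟨t, ht, htop⟩ := exists_mem_eq_sup p.support (support_nonempty.2 hne) Finsupp.degree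
  have hdegree : p.totalDegree = t.degree := htop
  obtain ⟨s, hs, hs_ne⟩ := combinatorial_nullstellensatz_exists_eval_nonzero p t
    (mem_support_iff.1 ht) hdegree (fun i => (range (t i + 1)).map Nat.castEmbedding)
    (fun i => by simp)
  have hnat : ∀ i, ∃ n ≤ t i, (n : S) = s i := fun i => by
    simpa [Nat.lt_succ_iff] using hs i
  choose n hn hns using hnat
  refine hs_ne ?_
  rw [← funext hns]
  refine hzero n ?_
  calc ∑ i, n i ≤ ∑ i, t i := sum_le_sum fun i _ => hn i
    _ = p.totalDegree := by rw [hdegree, Finsupp.degree_eq_sum]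
    _ ≤ k := hp

lemma totalDegree_aeval_le [CommSemiring R] [CommSemiring S] [Algebra R S]
    (f : MvPolynomial σ R) {p : σ → MvPolynomial ι S} {m : ℕ}
    (hp : ∀ j, (p j).totalDegree ≤ m) : (aeval p f).totalDegree ≤ f.totalDegree * m := by
  rw [aeval_def, eval₂_eq]
  refine totalDegree_finsetSum_le fun u hu => ?_
  calc (algebraMap R (MvPolynomial ι S) (coeff u f) * ∏ j ∈ u.support, p j ^ u j).totalDegree
      ≤ (∏ j ∈ u.support, p j ^ u j).totalDegree := by
        refine (totalDegree_mul _ _).trans_eq ?_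
        rw [MvPolynomial.algebraMap_apply, totalDegree_C, zero_add]
    _ ≤ ∑ j ∈ u.support, (p j ^ u j).totalDegree := totalDegree_finsetProd _ _
    _ ≤ ∑ j ∈ u.support, u j * m := sum_le_sum fun j _ =>
        (totalDegree_pow _ _).trans (Nat.mul_le_mul_left _ (hp j))
    _ = u.sum (fun _ a => a) * m := (sum_mul _ _ _).symm
    _ ≤ f.totalDegree * m := Nat.mul_le_mul_right _ (le_totalDegree hu)

lemma exists_totalDegree_le_eval_eq_aeval_add_sum_smul [Fintype ι] [CommSemiring R]
    [CommSemiring S] [Algebra R S] (f : MvPolynomial σ R) (a : σ → S) (e : ι → σ → S) :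
    ∃ p : MvPolynomial ι S, p.totalDegree ≤ f.totalDegree ∧
      ∀ t : ι → S, eval t p = aeval (a + ∑ i, t i • e i) f := by
  let q : σ → MvPolynomial ι S := fun j => C (a j) + ∑ i, C (e i j) * X i
  have hq : ∀ j, (q j).totalDegree ≤ 1 := fun j => by
    refine (totalDegree_add _ _).trans (max_le (by simp) (totalDegree_finsetSum_le fun i _ => ?_))
    rw [C_mul_X_eq_monomial]
    simpa using totalDegree_monomial_le (Finsupp.single i 1) (e i j)
  refine ⟨aeval q f, by simpa using totalDegree_aeval_le f hq, fun t => ?_⟩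
  have heval_q : (fun j => eval t (q j)) = a + ∑ i, t i • e i := by
    ext j
    simp [q, mul_comm]
  rw [← heval_q]
  exact comp_aeval_apply q ((aeval t : MvPolynomial ι S →ₐ[S] S).restrictScalars R) f

lemma aeval_add_sum_smul_eq_of_forall_natCast [Fintype ι] [CommSemiring R] [CommRing S]
    [IsDomain S] [CharZero S] [Algebra R S] {f : MvPolynomial σ R} {k : ℕ}
    (hf : f.totalDegree ≤ k) {a : σ → S} {e : ι → σ → S} {c : S}
    (hgrid : ∀ n : ι → ℕ, ∑ i, n i ≤ k → aeval (a + ∑ i, (n i : S) • e i) f = c)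
    (t : ι → S) : aeval (a + ∑ i, t i • e i) f = c := by
  obtain ⟨p, hp_deg, hp_eval⟩ := exists_totalDegree_le_eval_eq_aeval_add_sum_smul f a e
  have hp : p - C c = 0 := by
    refine eq_zero_of_eval_natCast_eq_zero
      ((totalDegree_sub_C_le p c).trans (hp_deg.trans hf)) fun n hn => ?_
    rw [map_sub, eval_C, hp_eval, hgrid n hn, sub_self]
  rw [← hp_eval, sub_eq_zero.1 hp, eval_C]

end PolynomialIdentity

lemma subsingleton_of_finrank_direction_affineSpan_eq_zero {K E P : Type*} [DivisionRing K]
    [AddCommGroup E] [Module K E] [AddTorsor E P] [FiniteDimensional K E] {s : Set P}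
    (hs : Module.finrank K (affineSpan K s).direction = 0) : s.Subsingleton := by
  rwa [Submodule.finrank_eq_zero, direction_affineSpan, vectorSpan_eq_bot_iff_subsingleton] at hs

section Polytope

variable {σ ι 𝕜 : Type*} [Field 𝕜]

lemma exists_intCast_div_eq_add_sum_natCast_smul [Fintype ι] [CharZero 𝕜] {k : ℕ} (hk : k ≠ 0)
    (v : σ → ℤ) (z : ι → σ → ℤ) (n : ι → ℕ) (j : σ) :
    ∃ m : ℤ, ((fun j => (v j : 𝕜)) + ∑ i, (n i : 𝕜) • (k : 𝕜)⁻¹ •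
      ((fun j => (z i j : 𝕜)) - fun j => (v j : 𝕜))) j = m / k := by
  have hk' : (k : 𝕜) ≠ 0 := Nat.cast_ne_zero.2 hk
  refine ⟨k * v j + ∑ i, n i * (z i j - v j), ?_⟩
  simp only [Pi.add_apply, Finset.sum_apply, Pi.smul_apply, Pi.sub_apply, smul_eq_mul]
  push_cast
  rw [add_div, sum_div, mul_div_cancel_left₀ _ hk']
  congr! 2 with i
  ring

variable [LinearOrder 𝕜] [IsStrictOrderedRing 𝕜]

lemma convex_add_sum_smul_sub_mem {E : Type*} [AddCommGroup E] [Module 𝕜 E] [Fintype ι]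
    {s : Set E} (hs : Convex 𝕜 s) {a : E} (ha : a ∈ s) {z : ι → E} (hz : ∀ i, z i ∈ s)
    {w : ι → 𝕜} (hw : ∀ i, 0 ≤ w i) (hw_sum : ∑ i, w i ≤ 1) :
    a + ∑ i, w i • (z i - a) ∈ s := by
  have hmem : ∑ o : Option ι, o.elim (1 - ∑ i, w i) w • o.elim a z ∈ s := by
    refine hs.sum_mem ?_ (by simp [Fintype.sum_option]) ?_
    · rintro (_ | i) _
      exacts [sub_nonneg.2 hw_sum, hw i]
    · rintro (_ | i) _
      exacts [ha, hz i]
  convert hmem using 1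
  simp only [Fintype.sum_option, Option.elim, smul_sub, sum_sub_distrib, sub_smul, one_smul,
    sum_smul]
  abel

lemma convex_add_sum_natCast_smul_inv_smul_sub_mem {E : Type*} [AddCommGroup E] [Module 𝕜 E]
    [Fintype ι] {s : Set E} (hs : Convex 𝕜 s) {a : E} (ha : a ∈ s) {z : ι → E} (hz : ∀ i, z i ∈ s)
    {k : ℕ} {n : ι → ℕ} (hn : ∑ i, n i ≤ k) :
    a + ∑ i, (n i : 𝕜) • (k : 𝕜)⁻¹ • (z i - a) ∈ s := by
  simp only [smul_smul]
  refine convex_add_sum_smul_sub_mem hs ha hz (fun i => by positivity) ?_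
  rw [← sum_mul, ← div_eq_mul_inv]
  exact div_le_one_of_le₀ (by exact_mod_cast hn) k.cast_nonneg

lemma aeval_eq_of_mem_convexHull_intCast {R : Type*} [CommSemiring R] [Algebra R 𝕜]
    {f : MvPolynomial σ R} {k : ℕ} (hf : f.totalDegree ≤ k) (hk : k ≠ 0)
    {V : Set (σ → ℤ)} {Q : Set (σ → 𝕜)}
    (hQ : Q = convexHull 𝕜 ((fun v : σ → ℤ => fun j => (v j : 𝕜)) '' V)) {c : 𝕜}
    (hgrid : ∀ y ∈ Q, (∀ j, ∃ n : ℤ, y j = n / k) → aeval y f = c)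
    {x : σ → 𝕜} (hx : x ∈ Q) : aeval x f = c := by
  have hV : ∀ v ∈ V, (fun j => (v j : 𝕜)) ∈ Q := fun v hv => by
    rw [hQ]
    exact subset_convexHull 𝕜 _ (Set.mem_image_of_mem _ hv)
  have hconvex : Convex 𝕜 Q := hQ ▸ convex_convexHull 𝕜 _
  obtain ⟨_, v, hv, rfl⟩ := convexHull_nonempty_iff.1 ⟨x, hQ ▸ hx⟩
  rw [hQ, mem_convexHull_iff_exists_fintype] at hx
  obtain ⟨ι, _, w, z', -, hw_sum, hz', rfl⟩ := hx
  choose z hz hzz' using hz'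
  obtain rfl : (fun i j => (z i j : 𝕜)) = z' := funext hzz'
  have hconst := aeval_add_sum_smul_eq_of_forall_natCast hf
    (fun n hn => hgrid _
      (convex_add_sum_natCast_smul_inv_smul_sub_mem hconvex (hV v hv) (fun i => hV _ (hz i)) hn)
      (exists_intCast_div_eq_add_sum_natCast_smul hk v z n))
    (fun i => (k : 𝕜) * w i)
  have hk' : (k : 𝕜) ≠ 0 := Nat.cast_ne_zero.2 hk
  convert hconst using 2
  simp only [smul_smul, mul_right_comm _ (w _), mul_inv_cancel₀ hk', one_mul, smul_sub,
    sum_sub_distrib, ← sum_smul, hw_sum, one_smul, add_sub_cancel]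

theorem stmt_6_general {R : Type*} [CommSemiring R] [Algebra R 𝕜] (f : MvPolynomial σ R)
    (V : Set (σ → ℤ)) (Q : Set (σ → 𝕜))
    (hQ : Q = convexHull 𝕜 ((fun v : σ → ℤ => fun j => (v j : 𝕜)) '' V))
    (k : ℕ) (hk : f.totalDegree ≤ k) :
    (∀ x ∈ Q, ∀ y ∈ Q, aeval x f = aeval y f) ↔
    (∀ x ∈ Q, (∀ j, ∃ n : ℤ, x j = (n : 𝕜) / (k : 𝕜)) →
     ∀ y ∈ Q, (∀ j, ∃ n : ℤ, y j = (n : 𝕜) / (k : 𝕜)) → aeval x f = aeval y f) := by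
  refine ⟨fun h x hx _ y hy _ => h x hx y hy, fun hgrid x hx y hy => ?_⟩
  obtain rfl | hk0 := eq_or_ne k 0
  · rw [totalDegree_eq_zero_iff_eq_C.1 (Nat.le_zero.1 hk), aeval_C, aeval_C]
  · refine aeval_eq_of_mem_convexHull_intCast hk hk0 hQ (fun u hu hu_grid => ?_) hx
    exact (aeval_eq_of_mem_convexHull_intCast hk hk0 hQ
      (fun u' hu' hu'_grid => hgrid u' hu' hu'_grid u hu hu_grid) hy).symm

end Polytope

/-- constancy on an integral polytope is detected by a fine enough
grid. If `f` has total degree at most `D`, `Q` is an integral polytope whose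
affine hull has dimension `d' ≤ d`, and `k ≥ D·d'`, then `f` is constant on `Q`
iff `f` is constant on `Q ∩ (1/k)ℤ^d`. -/
theorem stmt_6 (d D : ℕ) (f : MvPolynomial (Fin d) ℚ) (hdeg : f.totalDegree ≤ D)
    (V : Finset (Fin d → ℤ)) (Q : Set (Fin d → ℝ))
    (hQ : Q = convexHull ℝ ((fun v : Fin d → ℤ => fun i => (v i : ℝ)) '' (V : Set (Fin d → ℤ))))
    (d' : ℕ) (hd' : d' = Module.finrank ℝ (affineSpan ℝ Q).direction) (hd'd : d' ≤ d)
    (k : ℕ) (hk : D * d' ≤ k) :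
    (∀ x ∈ Q, ∀ y ∈ Q, MvPolynomial.aeval x f = MvPolynomial.aeval y f) ↔
    (∀ x ∈ Q, (∀ i, ∃ n : ℤ, x i = (n : ℝ) / (k : ℝ)) →
     ∀ y ∈ Q, (∀ i, ∃ n : ℤ, y i = (n : ℝ) / (k : ℝ)) →
      MvPolynomial.aeval x f = MvPolynomial.aeval y f) := by
  obtain rfl | hd'_pos := d'.eq_zero_or_pos
  · have hQ_sub := subsingleton_of_finrank_direction_affineSpan_eq_zero hd'.symm
    exact ⟨fun h x hx _ y hy _ => h x hx y hy, fun _ x hx y hy => by rw [hQ_sub hx hy]⟩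
  · exact stmt_6_general f V Q hQ k (hdeg.trans ((Nat.le_mul_of_pos_right D hd'_pos).trans hk))
end

section
/- Let $f \in \mathbb{Z}[x_1, \dots, x_{d_1}, z_1, \dots, z_{d_2}]$ be a polynomial with integer coefficients and total degree at most $D$. Let $P \subseteq \mathbb{R}^{d_1} \times \mathbb{R}^{d_2}$ be a polytope, and let $\Delta$ be a positive integer such that for every $z \in \mathbb{Z}^{d_2}$ the scaled slice $\Delta P_z = \{\Delta x : (x,z) \in P\}$ is an integral polytope. Let $m = k\Delta$ where $k$ is an integer with $k \ge D \, d_1$. If $f$ is not constant on $P \cap (\mathbb{R}^{d_1} \times \mathbb{Z}^{d_2})$, then $f(x_{\max}, z_{\max}) - f(x_{\min}, z_{\min}) \ge m^{-D}$, where $(x_{\max}, z_{\max})$ attains the maximum and $(x_{\min}, z_{\min})$ attains the minimum of $f$ over $P \cap (\mathbb{R}^{d_1} \times \mathbb{Z}^{d_2})$. -/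
/-!
A polynomial `g` of degree at most `D` that is constant on a grid `{0, 1/k, …, D/k}ⁿ` is constant.
Parametrising a simplex with vertices `v₀, …, vₙ` by `t ↦ v₀ + ∑ tᵢ (vᵢ - v₀)` and using
`k ≥ D n`, every grid point maps into the simplex, to an average of `k` vertices. By Carathéodory's
theorem, `g` is therefore constant on a convex hull in `ℝⁿ` as soon as it is constant on the
averages of `k` generating points. When the generators lie in `(1/Δ)ℤⁿ` these averages lie in
`(1/m)ℤⁿ` with `m = kΔ`. So a polynomial `f` that is not constant on the mixed-integer points takes
two distinct values at mixed-integer points with `x ∈ (1/m)ℤⁿ`, and those values lie in `m⁻ᴰ ℤ`.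
-/

open MvPolynomial

section PolynomialDegree

theorem totalDegree_aeval_le_totalDegree {σ τ R S : Type*} [CommSemiring R] [CommSemiring S]
    [Algebra R S] {g : σ → MvPolynomial τ S} (hg : ∀ s, (g s).totalDegree ≤ 1)
    (f : MvPolynomial σ R) : (aeval g f).totalDegree ≤ f.totalDegree := by
  rw [aeval_def, eval₂_eq]
  refine totalDegree_finsetSum_le fun d hd => ?_
  calc (algebraMap R (MvPolynomial τ S) (f.coeff d) * ∏ i ∈ d.support, g i ^ d i).totalDegree
      ≤ 0 + ∑ i ∈ d.support, (g i ^ d i).totalDegree := by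
        refine (totalDegree_mul _ _).trans (add_le_add ?_ (totalDegree_finsetProd _ _))
        rw [MvPolynomial.algebraMap_apply, totalDegree_C]
    _ ≤ ∑ i ∈ d.support, d i := by
        rw [zero_add]
        exact Finset.sum_le_sum fun i _ => (totalDegree_pow _ _).trans
          ((Nat.mul_le_mul_left _ (hg i)).trans_eq (mul_one _))
    _ ≤ f.totalDegree := le_totalDegree hd

theorem pow_mul_aeval_mem {σ R A : Type*} [CommSemiring R] [CommSemiring A] [Algebra R A]
    (T : Subalgebra R A) {f : MvPolynomial σ R} {D : ℕ} (hf : f.totalDegree ≤ D) {a : A}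
    (ha : a ∈ T) {p : σ → A} (hp : ∀ s, a * p s ∈ T) : a ^ D * aeval p f ∈ T := by
  rw [aeval_def, eval₂_eq, Finset.mul_sum]
  refine sum_mem fun d hd => ?_
  have hdD : ∑ i ∈ d.support, d i ≤ D := (le_totalDegree hd).trans hf
  have hterm : a ^ D * (algebraMap R A (f.coeff d) * ∏ i ∈ d.support, p i ^ d i) =
      a ^ (D - ∑ i ∈ d.support, d i) * algebraMap R A (f.coeff d) *
        ∏ i ∈ d.support, (a * p i) ^ d i := by
    rw [← pow_sub_mul_pow a hdD, ← Finset.prod_pow_eq_pow_sum]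
    simp only [mul_pow, Finset.prod_mul_distrib]
    ring
  rw [hterm]
  exact mul_mem (mul_mem (pow_mem ha _) (T.algebraMap_mem _))
    (prod_mem fun i _ => pow_mem (hp i) _)

end PolynomialDegree

section GridConstancy

variable {σ J K : Type*} [Field K] [CharZero K]

theorem eval_eq_of_forall_grid [Finite J] {g : MvPolynomial J K} {D k : ℕ}
    (hg : ∀ i, g.degreeOf i ≤ D) (hk : k ≠ 0) {c : K}
    (hgrid : ∀ a : J → ℕ, (∀ i, a i ≤ D) → eval (fun i => (a i / k : K)) g = c) (t : J → K) :
    eval t g = c := by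
  classical
  have hk' : (k : K) ≠ 0 := Nat.cast_ne_zero.2 hk
  have hinj : Function.Injective fun n : ℕ => (n / k : K) := fun a b hab =>
    Nat.cast_injective ((div_left_inj' hk').1 hab)
  have hzero : g - C c = 0 := by
    refine eq_zero_of_eval_zero_at_prod_finset _
      (fun _ => (Finset.range (D + 1)).image fun n : ℕ => (n / k : K)) (fun i => ?_) fun x hx => ?_
    · rw [Finset.card_image_of_injective _ hinj, Finset.card_range, Nat.lt_succ_iff]
      exact (degreeOf_sub_le i g (C c)).trans (by simpa using hg i)
    · simp only [Finset.mem_image, Finset.mem_range, Nat.lt_succ_iff] at hx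
      choose a haD hax using hx
      rw [map_sub, eval_C, sub_eq_zero, ← hgrid a haD, funext hax]
  rw [sub_eq_zero.1 hzero, eval_C]

theorem eval_add_sum_smul_eq_of_forall_grid [Fintype J] {g : MvPolynomial σ K} {D k : ℕ}
    (hg : g.totalDegree ≤ D) (hk : k ≠ 0) (b : σ → K) (u : J → σ → K) {c : K}
    (hgrid : ∀ a : J → ℕ, (∀ i, a i ≤ D) → eval (b + ∑ i, (a i / k : K) • u i) g = c)
    (t : J → K) : eval (b + ∑ i, t i • u i) g = c := by
  let coord : σ → MvPolynomial J K := fun s => C (b s) + ∑ i, X i * C (u i s)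
  have hcoord_deg (s : σ) : (coord s).totalDegree ≤ 1 := by
    refine (totalDegree_add _ _).trans (max_le (by simp) (totalDegree_finsetSum_le fun i _ => ?_))
    exact (totalDegree_mul _ _).trans (by simp)
  have heval (r : J → K) : eval r (aeval coord g) = eval (b + ∑ i, r i • u i) g := by
    change aeval r (aeval coord g) = aeval (b + ∑ i, r i • u i) g
    rw [comp_aeval_apply]
    congr 2
    ext s
    simp [coord]
  rw [← heval]
  refine eval_eq_of_forall_grid (fun i => ?_) hk (fun a ha => (heval _).trans (hgrid a ha)) t
  exact (degreeOf_le_totalDegree _ i).trans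
    ((totalDegree_aeval_le_totalDegree hcoord_deg g).trans hg)

end GridConstancy

section Barycentric

theorem sum_smul_eq_add_sum_smul_sub {J R E : Type*} [Fintype J] [Ring R] [AddCommGroup E]
    [Module R E] {w : J → R} (hw : ∑ i, w i = 1) (v : J → E) (i₀ : J) :
    ∑ i, w i • v i = v i₀ + ∑ i, w i • (v i - v i₀) := by
  simp only [smul_sub, Finset.sum_sub_distrib, ← Finset.sum_smul, hw, one_smul,
    add_sub_cancel]

theorem exists_fin_sum_comp_eq_sum_nsmul {J E : Type*} [Fintype J] [AddCommMonoid E] {k : ℕ}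
    {n : J → ℕ} (hn : ∑ i, n i = k) (v : J → E) :
    ∃ j : Fin k → J, ∑ l, v (j l) = ∑ i, n i • v i := by
  let e : (Σ i, Fin (n i)) ≃ Fin k := Fintype.equivFinOfCardEq (by simpa using hn)
  refine ⟨fun l => (e.symm l).1, ?_⟩
  rw [e.symm.sum_comp fun x => v x.1, Fintype.sum_sigma]
  simp

theorem exists_average_eq_add_sum_smul_sub {J K E : Type*} [Fintype J] [DecidableEq J] [Field K]
    [CharZero K] [AddCommGroup E] [Module K E] {k : ℕ} (hk : k ≠ 0) (v : J → E) {i₀ : J}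
    {a : J → ℕ} (ha : ∑ i ∈ Finset.univ \ {i₀}, a i ≤ k) :
    ∃ j : Fin k → J,
      (k : K)⁻¹ • ∑ l, v (j l) = v i₀ + ∑ i, (a i / k : K) • (v i - v i₀) := by
  -- The summand at `i₀` vanishes, so `a i₀` can be changed to make the multiplicities sum to `k`.
  let n : J → ℕ := Function.update a i₀ (k - ∑ i ∈ Finset.univ \ {i₀}, a i)
  have hn : ∑ i, n i = k := by
    rw [Finset.sum_update_of_mem (Finset.mem_univ i₀), Nat.sub_add_cancel ha]
  have hweights : ∑ i, (n i / k : K) = 1 := by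
    rw [← Finset.sum_div, ← Nat.cast_sum, hn, div_self (Nat.cast_ne_zero.2 hk)]
  obtain ⟨j, hj⟩ := exists_fin_sum_comp_eq_sum_nsmul hn v
  refine ⟨j, ?_⟩
  calc (k : K)⁻¹ • ∑ l, v (j l) = ∑ i, (n i / k : K) • v i := by
        rw [hj, Finset.smul_sum]
        simp only [div_eq_inv_mul, mul_smul, Nat.cast_smul_eq_nsmul]
    _ = v i₀ + ∑ i, (n i / k : K) • (v i - v i₀) := sum_smul_eq_add_sum_smul_sub hweights v i₀
    _ = v i₀ + ∑ i, (a i / k : K) • (v i - v i₀) := by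
        congr 1
        refine Finset.sum_congr rfl fun i _ => ?_
        obtain rfl | hi := eq_or_ne i i₀
        · simp
        · simp [n, hi]

theorem eval_sum_smul_eq_of_forall_average {σ J K : Type*} [Fintype J] [Field K] [CharZero K]
    {g : MvPolynomial σ K} {D d k : ℕ} (hg : g.totalDegree ≤ D) (hk : k ≠ 0) (hDk : D * d ≤ k)
    (hJ : Fintype.card J ≤ d + 1) (v : J → σ → K) {c : K}
    (havg : ∀ j : Fin k → J, eval ((k : K)⁻¹ • ∑ l, v (j l)) g = c)
    {w : J → K} (hw : ∑ i, w i = 1) : eval (∑ i, w i • v i) g = c := by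
  classical
  obtain ⟨i₀, -, -⟩ := Finset.exists_ne_zero_of_sum_ne_zero (hw.trans_ne one_ne_zero)
  rw [sum_smul_eq_add_sum_smul_sub hw v i₀]
  refine eval_add_sum_smul_eq_of_forall_grid hg hk _ _ (fun a ha => ?_) w
  have hothers : ∑ i ∈ Finset.univ \ {i₀}, a i ≤ k :=
    calc ∑ i ∈ Finset.univ \ {i₀}, a i ≤ (Finset.univ \ {i₀}).card * D :=
          Finset.sum_le_card_nsmul _ _ D fun i _ => ha i
      _ ≤ d * D := by
          rw [Finset.card_univ_sdiff, Finset.card_singleton]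
          exact Nat.mul_le_mul_right D (by lia)
      _ ≤ k := by rwa [mul_comm]
  obtain ⟨j, hj⟩ := exists_average_eq_add_sum_smul_sub (K := K) hk v hothers
  rw [← hj, havg]

theorem eval_eq_of_mem_convexHull_of_forall_average {σ 𝕜 : Type*} [Fintype σ] [Field 𝕜]
    [LinearOrder 𝕜] [IsStrictOrderedRing 𝕜] {g : MvPolynomial σ 𝕜} {D k : ℕ}
    (hg : g.totalDegree ≤ D) (hk : k ≠ 0) (hDk : D * Fintype.card σ ≤ k) {A : Set (σ → 𝕜)} {c : 𝕜}
    (havg : ∀ v : Fin k → σ → 𝕜, (∀ l, v l ∈ A) → eval ((k : 𝕜)⁻¹ • ∑ l, v l) g = c)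
    {x : σ → 𝕜} (hx : x ∈ convexHull 𝕜 A) : eval x g = c := by
  obtain ⟨J, _, v, w, hvA, hv, -, hw, rfl⟩ := eq_pos_convex_span_of_mem_convexHull hx
  have hJ : Fintype.card J ≤ Fintype.card σ + 1 := by
    refine hv.card_le_finrank_succ.trans (Nat.succ_le_succ ?_)
    exact (Submodule.finrank_le _).trans_eq (Module.finrank_fintype_fun_eq_card 𝕜)
  exact eval_sum_smul_eq_of_forall_average hg hk hDk hJ v
    (fun j => havg _ fun l => hvA ⟨j l, rfl⟩) hw

end Barycentric

section FractionalLattice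

/-- The lattice `(1/m)ℤ^ι` in `ℝ^ι`, described by `m x ∈ ℤ^ι`; for `m = 0` this is all of `ℝ^ι`. -/
def fracLattice (ι : Type*) (m : ℕ) : AddSubgroup (ι → ℝ) where
  carrier := {x | ∀ i, ∃ n : ℤ, m * x i = n}
  zero_mem' i := ⟨0, by simp⟩
  add_mem' {x y} hx hy i := by
    obtain ⟨a, ha⟩ := hx i
    obtain ⟨b, hb⟩ := hy i
    exact ⟨a + b, by rw [Pi.add_apply, mul_add, ha, hb, Int.cast_add]⟩
  neg_mem' {x} hx i := by
    obtain ⟨a, ha⟩ := hx i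
    exact ⟨-a, by rw [Pi.neg_apply, mul_neg, ha, Int.cast_neg]⟩

variable {ι κ : Type*}

theorem inv_smul_mem_fracLattice_mul {k Δ : ℕ} (hk : k ≠ 0) {x : ι → ℝ}
    (hx : x ∈ fracLattice ι Δ) : (k : ℝ)⁻¹ • x ∈ fracLattice ι (k * Δ) := by
  intro i
  obtain ⟨n, hn⟩ := hx i
  refine ⟨n, ?_⟩
  rw [← hn, Pi.smul_apply, smul_eq_mul]
  push_cast
  field_simp

theorem sumElim_mem_fracLattice {m : ℕ} {x : ι → ℝ} (hx : x ∈ fracLattice ι m) {z : κ → ℝ}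
    (hz : ∀ i, ∃ n : ℤ, z i = n) : Sum.elim x z ∈ fracLattice (ι ⊕ κ) m := by
  rintro (i | i)
  · exact hx i
  · obtain ⟨n, hn⟩ := hz i
    exact ⟨m * n, by simp [hn]⟩

theorem exists_int_pow_mul_aeval_eq {f : MvPolynomial ι ℤ} {D : ℕ} (hf : f.totalDegree ≤ D)
    {m : ℕ} {x : ι → ℝ} (hx : x ∈ fracLattice ι m) : ∃ n : ℤ, (m : ℝ) ^ D * aeval x f = n := by
  have hmem : (m : ℝ) ^ D * aeval x f ∈ (⊥ : Subalgebra ℤ ℝ) := by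
    refine pow_mul_aeval_mem ⊥ hf (natCast_mem _ m) fun i => ?_
    obtain ⟨n, hn⟩ := hx i
    exact hn ▸ intCast_mem _ n
  obtain ⟨n, hn⟩ := Algebra.mem_bot.1 hmem
  exact ⟨n, hn.symm⟩

open scoped Pointwise in
theorem exists_subset_fracLattice_convexHull_eq {Δ : ℕ} (hΔ : Δ ≠ 0) {S : Set (ι → ℝ)}
    {V : Set (ι → ℤ)} (hS : {y : ι → ℝ | ∃ x ∈ S, y = fun i => (Δ : ℝ) * x i} =
      convexHull ℝ ((fun v : ι → ℤ => fun i => (v i : ℝ)) '' V)) :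
    ∃ A : Set (ι → ℝ), A ⊆ fracLattice ι Δ ∧ S = convexHull ℝ A := by
  have hΔ' : (Δ : ℝ) ≠ 0 := Nat.cast_ne_zero.2 hΔ
  have hscale : (Δ : ℝ) • S = {y : ι → ℝ | ∃ x ∈ S, y = fun i => (Δ : ℝ) * x i} := by
    ext y
    exact exists_congr fun x => and_congr_right fun _ => eq_comm
  refine ⟨(Δ : ℝ)⁻¹ • ((fun v : ι → ℤ => fun i => (v i : ℝ)) '' V), ?_, ?_⟩
  · rintro _ ⟨_, ⟨v, -, rfl⟩, rfl⟩ i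
    exact ⟨v i, mul_inv_cancel_left₀ hΔ' _⟩
  · rw [convexHull_smul, ← hS, ← hscale, inv_smul_smul₀ hΔ']

theorem aeval_sumElim_eq_of_mem_convexHull [Fintype ι] {f : MvPolynomial (ι ⊕ κ) ℤ} {D k Δ : ℕ}
    (hf : f.totalDegree ≤ D) (hk : k ≠ 0) (hDk : D * Fintype.card ι ≤ k) (z : κ → ℝ)
    {A : Set (ι → ℝ)} (hA : A ⊆ fracLattice ι Δ) {c : ℝ}
    (hlattice : ∀ x ∈ convexHull ℝ A, x ∈ fracLattice ι (k * Δ) → aeval (Sum.elim x z) f = c)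
    {x : ι → ℝ} (hx : x ∈ convexHull ℝ A) : aeval (Sum.elim x z) f = c := by
  let g : MvPolynomial ι ℝ := aeval (Sum.elim X (C ∘ z)) f
  have heval (y : ι → ℝ) : eval y g = aeval (Sum.elim y z) f := by
    change (aeval y).restrictScalars ℤ (aeval (Sum.elim X (C ∘ z)) f) = _
    rw [comp_aeval_apply]
    congr 2
    ext (i | i) <;> simp
  have hg : g.totalDegree ≤ D :=
    (totalDegree_aeval_le_totalDegree (by rintro (i | i) <;> simp) f).trans hf
  rw [← heval]
  refine eval_eq_of_mem_convexHull_of_forall_average hg hk hDk (fun v hv => ?_) hx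
  rw [heval]
  refine hlattice _ ?_ (inv_smul_mem_fracLattice_mul hk (sum_mem fun l _ => hA (hv l)))
  rw [Finset.smul_sum]
  exact (convex_convexHull ℝ A).sum_mem (fun _ _ => by positivity) (by simp [hk])
    fun l _ => subset_convexHull ℝ A (hv l)

end FractionalLattice

section MixedInteger

variable {ι κ : Type*}

/-- The mixed-integer points `P ∩ (ℝ^ι × ℤ^κ)` of a set `P`. -/
def mixedIntegerPoints (P : Set ((ι → ℝ) × (κ → ℝ))) : Set ((ι → ℝ) × (κ → ℝ)) :=
  {p | p ∈ P ∧ ∀ i, ∃ n : ℤ, p.2 i = n}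

theorem aeval_eq_of_forall_fracLattice [Fintype ι] {f : MvPolynomial (ι ⊕ κ) ℤ} {D k Δ : ℕ}
    (hf : f.totalDegree ≤ D) (hk : k ≠ 0) (hDk : D * Fintype.card ι ≤ k)
    {P : Set ((ι → ℝ) × (κ → ℝ))}
    (hslice : ∀ z : κ → ℤ, ∃ A : Set (ι → ℝ),
      A ⊆ fracLattice ι Δ ∧ {x | (x, fun i => (z i : ℝ)) ∈ P} = convexHull ℝ A) {c : ℝ}
    (hlattice : ∀ q ∈ mixedIntegerPoints P, q.1 ∈ fracLattice ι (k * Δ) →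
      aeval (Sum.elim q.1 q.2) f = c)
    {p : (ι → ℝ) × (κ → ℝ)} (hp : p ∈ mixedIntegerPoints P) :
    aeval (Sum.elim p.1 p.2) f = c := by
  obtain ⟨x, y⟩ := p
  obtain ⟨hxP, hy⟩ := hp
  choose z hz using hy
  obtain rfl : y = fun i => (z i : ℝ) := funext hz
  obtain ⟨A, hA, hPA⟩ := hslice z
  refine aeval_sumElim_eq_of_mem_convexHull hf hk hDk _ hA (fun x' hx' hx'm => ?_) (hPA ▸ hxP)
  exact hlattice (x', _) ⟨hPA.symm.subset hx', fun i => ⟨z i, rfl⟩⟩ hx'm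

theorem inv_le_sub_of_mul_eq_intCast {K : Type*} [Field K] [LinearOrder K] [IsStrictOrderedRing K]
    {r a b : K} (hr : 0 < r) (ha : ∃ n : ℤ, r * a = n) (hb : ∃ n : ℤ, r * b = n) (hba : b < a) :
    r⁻¹ ≤ a - b := by
  obtain ⟨n, hn⟩ := ha
  obtain ⟨l, hl⟩ := hb
  have hln : l + 1 ≤ n := by
    rw [Int.add_one_le_iff, ← Int.cast_lt (R := K), ← hn, ← hl]
    exact mul_lt_mul_of_pos_left hba hr
  rw [inv_le_iff_one_le_mul₀' hr, mul_sub, hn, hl, le_sub_iff_add_le']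
  exact_mod_cast hln

theorem exists_inv_pow_le_aeval_sub_aeval [Fintype ι] {f : MvPolynomial (ι ⊕ κ) ℤ} {D k Δ : ℕ}
    (hf : f.totalDegree ≤ D) (hk : k ≠ 0) (hDk : D * Fintype.card ι ≤ k) (hΔ : Δ ≠ 0)
    {P : Set ((ι → ℝ) × (κ → ℝ))}
    (hslice : ∀ z : κ → ℤ, ∃ A : Set (ι → ℝ),
      A ⊆ fracLattice ι Δ ∧ {x | (x, fun i => (z i : ℝ)) ∈ P} = convexHull ℝ A)
    {p q : (ι → ℝ) × (κ → ℝ)} (hp : p ∈ mixedIntegerPoints P) (hq : q ∈ mixedIntegerPoints P)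
    (hpq : aeval (Sum.elim p.1 p.2) f ≠ aeval (Sum.elim q.1 q.2) f) :
    ∃ p ∈ mixedIntegerPoints P, ∃ q ∈ mixedIntegerPoints P, (((k * Δ : ℕ) : ℝ) ^ D)⁻¹ ≤
      aeval (Sum.elim p.1 p.2) f - aeval (Sum.elim q.1 q.2) f := by
  have exists_lattice_ne {c : ℝ} {r : (ι → ℝ) × (κ → ℝ)} (hr : r ∈ mixedIntegerPoints P)
      (hrc : aeval (Sum.elim r.1 r.2) f ≠ c) :
      ∃ s ∈ mixedIntegerPoints P, s.1 ∈ fracLattice ι (k * Δ) ∧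
        aeval (Sum.elim s.1 s.2) f ≠ c := by
    contrapose! hrc
    exact aeval_eq_of_forall_fracLattice hf hk hDk hslice hrc hr
  obtain ⟨s, hs, hsm, hsp⟩ := exists_lattice_ne hq hpq.symm
  obtain ⟨t, ht, htm, hts⟩ := exists_lattice_ne hp hsp.symm
  have hpow : (0 : ℝ) < ((k * Δ : ℕ) : ℝ) ^ D := by positivity
  have hs_int := exists_int_pow_mul_aeval_eq hf (sumElim_mem_fracLattice hsm hs.2)
  have ht_int := exists_int_pow_mul_aeval_eq hf (sumElim_mem_fracLattice htm ht.2)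
  rcases hts.lt_or_gt with hlt | hgt
  · exact ⟨s, hs, t, ht, inv_le_sub_of_mul_eq_intCast hpow hs_int ht_int hlt⟩
  · exact ⟨t, ht, s, hs, inv_le_sub_of_mul_eq_intCast hpow ht_int hs_int hgt⟩

theorem stmt_8_general [Fintype ι] {f : MvPolynomial (ι ⊕ κ) ℤ} {D : ℕ} (hf : f.totalDegree ≤ D)
    {P : Set ((ι → ℝ) × (κ → ℝ))} {Δ : ℕ} (hΔ : 0 < Δ)
    (hslice : ∀ z : κ → ℤ, ∃ V : Set (ι → ℤ),
      {y : ι → ℝ | ∃ x : ι → ℝ, (x, fun i => (z i : ℝ)) ∈ P ∧ y = fun i => (Δ : ℝ) * x i} =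
        convexHull ℝ ((fun v : ι → ℤ => fun i => (v i : ℝ)) '' V))
    {k m : ℕ} (hk : D * Fintype.card ι ≤ k) (hm : m = k * Δ)
    (hnc : ¬ ∀ p ∈ mixedIntegerPoints P, ∀ q ∈ mixedIntegerPoints P,
      aeval (Sum.elim p.1 p.2) f = aeval (Sum.elim q.1 q.2) f) :
    ∃ p ∈ mixedIntegerPoints P, ∃ q ∈ mixedIntegerPoints P,
      ((m : ℝ) ^ D)⁻¹ ≤ aeval (Sum.elim p.1 p.2) f - aeval (Sum.elim q.1 q.2) f := by
  subst hm
  push Not at hnc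
  obtain ⟨p, hp, q, hq, hpq⟩ := hnc
  have hD : D ≠ 0 := by
    rintro rfl
    rw [totalDegree_eq_zero_iff_eq_C.1 (Nat.le_zero.1 hf), aeval_C, aeval_C] at hpq
    exact hpq rfl
  obtain rfl | hk0 := eq_or_ne k 0
  · -- Here `m = 0`, so the bound reads `0⁻¹ = 0`.
    exact ⟨p, hp, p, hp, by simp [hD]⟩
  · have hslice' (z : κ → ℤ) := (hslice z).elim fun _ hV =>
      exists_subset_fracLattice_convexHull_eq (S := {x | (x, fun i => (z i : ℝ)) ∈ P}) hΔ.ne' hV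
    exact exists_inv_pow_le_aeval_sub_aeval hf hk0 hk hΔ.ne' hslice' hp hq hpq

end MixedInteger

/-- lower bound on the range of a non-constant integer polynomial
over the mixed-integer points of a polytope. In the setting of the
mixed-integer constancy test (with `Δ` making every scaled slice `Δ·P_z`
integral, and `m = kΔ`, `k ≥ D·d₁`), if `f` is not constant on
`P ∩ (ℝ^{d₁} × ℤ^{d₂})`, then `f(x_max, z_max) - f(x_min, z_min) ≥ m^{-D}`. -/
theorem stmt_8 (d1 d2 D : ℕ) (f : MvPolynomial (Fin d1 ⊕ Fin d2) ℤ)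
    (hdeg : f.totalDegree ≤ D)
    (P : Set ((Fin d1 → ℝ) × (Fin d2 → ℝ)))
    (hpoly : ∃ W : Finset ((Fin d1 → ℝ) × (Fin d2 → ℝ)), P = convexHull ℝ (W : Set _))
    (Δ : ℕ) (hΔ : 0 < Δ)
    (hslice : ∀ z : Fin d2 → ℤ, ∃ V : Finset (Fin d1 → ℤ),
      {y : Fin d1 → ℝ | ∃ x : Fin d1 → ℝ,
          (x, fun i => (z i : ℝ)) ∈ P ∧ y = fun i => (Δ : ℝ) * x i}
        = convexHull ℝ ((fun v : Fin d1 → ℤ => fun i => (v i : ℝ)) '' (V : Set (Fin d1 → ℤ))))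
    (k m : ℕ) (hk : D * d1 ≤ k) (hm : m = k * Δ)
    (xzmax xzmin : (Fin d1 → ℝ) × (Fin d2 → ℝ))
    (hmaxmem : xzmax ∈ P) (hmaxint : ∀ i, ∃ n : ℤ, xzmax.2 i = (n : ℝ))
    (hminmem : xzmin ∈ P) (hminint : ∀ i, ∃ n : ℤ, xzmin.2 i = (n : ℝ))
    (hmax : ∀ xz ∈ P, (∀ i, ∃ n : ℤ, xz.2 i = (n : ℝ)) →
      MvPolynomial.aeval (Sum.elim xz.1 xz.2) f
        ≤ MvPolynomial.aeval (Sum.elim xzmax.1 xzmax.2) f)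
    (hmin : ∀ xz ∈ P, (∀ i, ∃ n : ℤ, xz.2 i = (n : ℝ)) →
      MvPolynomial.aeval (Sum.elim xzmin.1 xzmin.2) f
        ≤ MvPolynomial.aeval (Sum.elim xz.1 xz.2) f)
    (hnc : ¬ (∀ xz ∈ P, (∀ i, ∃ n : ℤ, xz.2 i = (n : ℝ)) →
      ∀ yw ∈ P, (∀ i, ∃ n : ℤ, yw.2 i = (n : ℝ)) →
        MvPolynomial.aeval (Sum.elim xz.1 xz.2) f
          = MvPolynomial.aeval (Sum.elim yw.1 yw.2) f)) :
    ((m : ℝ) ^ D)⁻¹ ≤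
      MvPolynomial.aeval (Sum.elim xzmax.1 xzmax.2) f
        - MvPolynomial.aeval (Sum.elim xzmin.1 xzmin.2) f := by
  obtain ⟨p, hp, q, hq, hpq⟩ := stmt_8_general hdeg hΔ (fun z => (hslice z).imp' _ fun _ => id)
    (by simpa using hk) hm fun h => hnc fun p hp hpi q hq hqi => h p ⟨hp, hpi⟩ q ⟨hq, hqi⟩
  exact hpq.trans (sub_le_sub (hmax p hp.1 hp.2) (hmin q hq.1 hq.2))
end
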